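/- arXiv:1710.03731 — 2 statements merged into one kernel-verified Lean document; each statement's English description precedes it below -/
import Mathlib

section
/- Let M_p be a weight sequence, let w and v be positive continuous functions on ℝ^d such that v(x)/w(x) → 0 as |x| → ∞, and let 0 < k < h. Then the inclusion of the unit ball of the ‖·‖_{B^{M_p,h}_w}-norm into the ‖·‖_{B^{M_p,k}_v}-normed space is compact: every sequence (φ_j)_{j∈ℕ} of functions in C^∞(ℝ^d) with sup_j ‖φ_j‖_{B^{M_p,h}_w} < ∞ admits a subsequence (φ_{j_i}) and a function φ ∈ C^∞(ℝ^d) with ‖φ‖_{B^{M_p,k}_v} < ∞ such that ‖φ_{j_i} − φ‖_{B^{M_p,k}_v} → 0. -/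
/-!
The argument is Arzelà–Ascoli applied to all partial derivatives at once. A bound on
`‖φ_j‖_{B^{M_p,h}_w}` bounds every iterated partial derivative `∂^l φ_j` (with `l` an arbitrary list
of directions, by symmetry of second derivatives: `derivAlong_perm`) by
`R M_{|l|} / (h^{|l|} w(x))`, which is bounded on balls. Applied to lists `i :: l`, this also gives a
Lipschitz bound for `∂^l φ_j` on balls, uniform in `j`. Hence for each `l` the sequence
`(∂^l φ_j)_j` lives in a compact subset of `C(ℝ^d, ℂ)` (`isCompact_lipSet`), and a countable product
of such sets is sequentially compact, so one subsequence works for all `l`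
(`exists_subseq_tendsto`). The limits `G l` satisfy `∂_i (G l) = G (i :: l)`, so that `G []` is
smooth with partial derivatives `G l` (`hasFDerivAt_limit`, `contDiff_limit`).

For the convergence in norm, each `∂^α (φ_{σ i} - ψ)` is at most `2 R M_{|α|} / (h^{|α|} w)`, whence
the quantity in the target norm is at most `2 R (k/h)^{|α|} v(x)/w(x)`. This is small when `|α|` is
large (as `k < h` and `v/w` is bounded) or when `x` is outside a large compact set (as `v/w → 0`);
the remaining finitely many `α` and compact set of `x` are covered by locally uniform convergence.
-/

open scoped ENNReal
open MeasureTheory Filter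

/-- A weight sequence: positive with `M_{p+1}/M_p → ∞`. -/
def IsWeightSeq (Mp : ℕ → ℝ) : Prop :=
  (∀ p, 0 < Mp p) ∧ Tendsto (fun p => Mp (p + 1) / Mp p) atTop atTop

/-- Condition (M.1) (logarithmic convexity). -/
def CondM1 (Mp : ℕ → ℝ) : Prop := ∀ p : ℕ, 1 ≤ p → Mp p ^ 2 ≤ Mp (p - 1) * Mp (p + 1)

/-- Condition (M.2) (stability under ultradifferential operators) with constants `C0, H`. -/
def CondM2 (Mp : ℕ → ℝ) (C0 H : ℝ) : Prop :=
  ∀ p q : ℕ, Mp (p + q) ≤ C0 * H ^ (p + q) * Mp p * Mp q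

/-- The associated function `M(t) = sup_p log (t^p M_0 / M_p)` for `t ≠ 0`, `M(0) = 0`. -/
noncomputable def assocFn (Mp : ℕ → ℝ) (t : ℝ) : ℝ :=
  if t = 0 then 0 else ⨆ p : ℕ, Real.log (t ^ p * Mp 0 / Mp p)

/-- Iterated partial derivative along a list of coordinate directions. -/
noncomputable def derivAlong {d : ℕ} :
    List (Fin d) → (EuclideanSpace ℝ (Fin d) → ℂ) → EuclideanSpace ℝ (Fin d) → ℂ
  | [], f => f
  | (i :: l), f => fun x => fderiv ℝ (derivAlong l f) x (EuclideanSpace.single i 1)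

/-- The partial derivative `∂^α` for a multi-index `α`. -/
noncomputable def mderiv {d : ℕ} (α : Fin d → ℕ) (f : EuclideanSpace ℝ (Fin d) → ℂ) :
    EuclideanSpace ℝ (Fin d) → ℂ :=
  derivAlong ((List.finRange d).flatMap fun i => List.replicate (α i) i) f

/-- The norm `‖φ‖_{B^{M_p,h}_v} = sup_α sup_x h^{|α|} |∂^α φ(x)| v(x) / M_{|α|} ∈ [0,∞]`. -/
noncomputable def Bnorm {d : ℕ} (Mp : ℕ → ℝ) (h : ℝ) (v : EuclideanSpace ℝ (Fin d) → ℝ)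
    (φ : EuclideanSpace ℝ (Fin d) → ℂ) : ℝ≥0∞ :=
  ⨆ (α : Fin d → ℕ) (x : EuclideanSpace ℝ (Fin d)),
    ENNReal.ofReal (h ^ (∑ i, α i) * ‖mderiv α φ x‖ * v x / Mp (∑ i, α i))

/-- The Gelfand-Shilov norm `‖φ‖_{S^{M_p,h}_{A_p,λ}} ∈ [0,∞]`. -/
noncomputable def Snorm {d : ℕ} (Mp Ap : ℕ → ℝ) (h lam : ℝ)
    (φ : EuclideanSpace ℝ (Fin d) → ℂ) : ℝ≥0∞ :=
  Bnorm Mp h (fun x => Real.exp (assocFn Ap (lam * ‖x‖))) φ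

/-- Membership in the Gelfand-Shilov space `S^{(M_p)}_{(A_p)}(ℝ^d)`. -/
def memGS {d : ℕ} (Mp Ap : ℕ → ℝ) (φ : EuclideanSpace ℝ (Fin d) → ℂ) : Prop :=
  ContDiff ℝ (⊤ : ℕ∞) φ ∧ ∀ h : ℝ, 0 < h → Snorm Mp Ap h h φ < ⊤

/-- The relation `p! ≺ M_p A_p`. -/
def factLtMA (Mp Ap : ℕ → ℝ) : Prop :=
  ∀ h : ℝ, 0 < h → ∃ C : ℝ, 0 < C ∧ ∀ p : ℕ, (p.factorial : ℝ) ≤ C * h ^ p * Mp p * Ap p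

/-! ### Iterated partial derivatives of smooth functions -/

theorem contDiff_derivAlong {d : ℕ} {f : EuclideanSpace ℝ (Fin d) → ℂ}
    (hf : ContDiff ℝ (⊤ : ℕ∞) f) (l : List (Fin d)) :
    ContDiff ℝ (⊤ : ℕ∞) (derivAlong l f) := by
  induction l with
  | nil => exact hf
  | cons i l ih =>
    have h1 : ContDiff ℝ (⊤ : ℕ∞) (fderiv ℝ (derivAlong l f)) :=
      ih.fderiv_right (by simp)
    exact h1.clm_apply contDiff_const

theorem differentiable_derivAlong {d : ℕ} {f : EuclideanSpace ℝ (Fin d) → ℂ}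
    (hf : ContDiff ℝ (⊤ : ℕ∞) f) (l : List (Fin d)) :
    Differentiable ℝ (derivAlong l f) :=
  (contDiff_derivAlong hf l).differentiable (by simp)

theorem derivAlong_swap {d : ℕ} {f : EuclideanSpace ℝ (Fin d) → ℂ}
    (hf : ContDiff ℝ (⊤ : ℕ∞) f) (i j : Fin d) (l : List (Fin d)) :
    derivAlong (i :: j :: l) f = derivAlong (j :: i :: l) f := by
  have hg := contDiff_derivAlong hf l
  have hg' : ContDiff ℝ (⊤ : ℕ∞) (fderiv ℝ (derivAlong l f)) :=
    hg.fderiv_right (by simp)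
  have hd : Differentiable ℝ (fderiv ℝ (derivAlong l f)) := hg'.differentiable (by simp)
  have key : ∀ (i j : Fin d) x, derivAlong (i :: j :: l) f x =
      fderiv ℝ (fderiv ℝ (derivAlong l f)) x (EuclideanSpace.single i 1)
        (EuclideanSpace.single j 1) := by
    intro i j x
    change fderiv ℝ (fun y => fderiv ℝ (derivAlong l f) y (EuclideanSpace.single j 1)) x
      (EuclideanSpace.single i 1) = _
    rw [fderiv_clm_apply (hd x) (differentiableAt_const _)]
    simp
  funext x
  rw [key, key]
  have hs : IsSymmSndFDerivAt ℝ (derivAlong l f) x :=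
    hg.contDiffAt.isSymmSndFDerivAt (by
      rw [minSmoothness_of_isRCLikeNormedField]
      exact WithTop.coe_le_coe.2 (le_top : (2 : ℕ∞) ≤ ⊤))
  exact hs _ _

theorem derivAlong_perm {d : ℕ} {f : EuclideanSpace ℝ (Fin d) → ℂ}
    (hf : ContDiff ℝ (⊤ : ℕ∞) f) {l l' : List (Fin d)} (h : l.Perm l') :
    derivAlong l f = derivAlong l' f := by
  induction h with
  | nil => rfl
  | cons i _ ih => simp only [derivAlong, ih]
  | swap i j l => exact derivAlong_swap hf _ _ _
  | trans _ _ ih1 ih2 => exact ih1.trans ih2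

theorem derivAlong_sub {d : ℕ} {f g : EuclideanSpace ℝ (Fin d) → ℂ}
    (hf : ContDiff ℝ (⊤ : ℕ∞) f) (hg : ContDiff ℝ (⊤ : ℕ∞) g) (l : List (Fin d)) :
    derivAlong l (fun x => f x - g x) = fun x => derivAlong l f x - derivAlong l g x := by
  induction l with
  | nil => rfl
  | cons i l ih =>
    funext x
    simp only [derivAlong, ih]
    rw [fderiv_fun_sub (differentiable_derivAlong hf l x) (differentiable_derivAlong hg l x)]
    simp

/-- The sorted list of directions of a multi-index `α`, so that `mderiv α = derivAlong (dirs α)`. -/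
def dirs {d : ℕ} (α : Fin d → ℕ) : List (Fin d) :=
  (List.finRange d).flatMap fun i => List.replicate (α i) i

theorem length_dirs {d : ℕ} (α : Fin d → ℕ) : (dirs α).length = ∑ i, α i := by
  simp [dirs, List.length_flatMap, Fin.sum_univ_def]

theorem count_dirs {d : ℕ} (α : Fin d → ℕ) (j : Fin d) : (dirs α).count j = α j := by
  have h : ((List.finRange d).map fun i => if i = j then α i else 0).sum
      = ∑ i, if i = j then α i else 0 := by
    rw [Fin.sum_univ_def]
  simp only [dirs, List.count_flatMap, Function.comp_def, List.count_replicate, beq_iff_eq]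
  rw [h]
  simp

/-- Every list of directions is a rearrangement of the sorted list of its multiplicities. -/
theorem perm_dirs {d : ℕ} (l : List (Fin d)) : l.Perm (dirs fun j => l.count j) := by
  rw [List.perm_iff_count]
  intro j
  rw [count_dirs]

/-- `coordForm m c` is the linear form `x ↦ x_m c`; it depends linearly and continuously on `c`. -/
noncomputable def coordForm {d : ℕ} (m : Fin d) : ℂ →L[ℝ] (EuclideanSpace ℝ (Fin d) →L[ℝ] ℂ) :=
  ContinuousLinearMap.smulRightL ℝ _ ℂ (EuclideanSpace.proj m : EuclideanSpace ℝ (Fin d) →L[ℝ] ℝ)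

theorem coordForm_apply {d : ℕ} (m : Fin d) (c : ℂ) (x : EuclideanSpace ℝ (Fin d)) :
    coordForm m c x = (x m : ℝ) • c := rfl

theorem norm_coordForm_le {d : ℕ} (m : Fin d) (c : ℂ) : ‖coordForm m c‖ ≤ ‖c‖ := by
  refine ContinuousLinearMap.opNorm_le_bound _ (norm_nonneg _) fun x => ?_
  rw [coordForm_apply, norm_smul, mul_comm]
  gcongr
  exact PiLp.norm_apply_le x m

theorem sum_coordForm {d : ℕ} (F : EuclideanSpace ℝ (Fin d) →L[ℝ] ℂ) :
    ∑ m, coordForm m (F (EuclideanSpace.single m 1)) = F := by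
  ext x
  have hx : x = ∑ m, x m • (EuclideanSpace.single m (1 : ℝ)) := by
    ext j
    simp [Finset.sum_apply, Pi.single_apply]
  conv_rhs => rw [hx]
  simp [coordForm_apply]

/-- The gradient of `∂^l f` is assembled from the partial derivatives `∂^{m :: l} f`. -/
theorem hasFDerivAt_derivAlong {d : ℕ} {f : EuclideanSpace ℝ (Fin d) → ℂ}
    (hf : ContDiff ℝ (⊤ : ℕ∞) f) (l : List (Fin d)) (x : EuclideanSpace ℝ (Fin d)) :
    HasFDerivAt (derivAlong l f) (∑ m, coordForm m (derivAlong (m :: l) f x)) x := by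
  have h := (differentiable_derivAlong hf l x).hasFDerivAt
  rwa [← sum_coordForm (fderiv ℝ (derivAlong l f) x)] at h

/-! ### A compact set of continuous functions -/

/-- The functions that, for every `n`, are bounded by `A n` and `A n`-Lipschitz on the ball of
radius `n`. -/
def lipSet {d : ℕ} (A : ℕ → ℝ) : Set (EuclideanSpace ℝ (Fin d) → ℂ) :=
  {f | ∀ n : ℕ, ∀ x ∈ Metric.closedBall (0 : EuclideanSpace ℝ (Fin d)) n,
    ∀ y ∈ Metric.closedBall (0 : EuclideanSpace ℝ (Fin d)) n,
      ‖f x‖ ≤ A n ∧ dist (f x) (f y) ≤ A n * dist x y}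

theorem isCompact_lipSet_pi {d : ℕ} (A : ℕ → ℝ) : IsCompact (lipSet (d := d) A) := by
  have hcl : IsClosed (lipSet (d := d) A) := by
    simp only [lipSet, Set.ofPred_forall, Set.ofPred_and]
    refine isClosed_iInter fun n => isClosed_iInter fun x => isClosed_iInter fun _ =>
      isClosed_iInter fun y => isClosed_iInter fun _ => ?_
    refine IsClosed.inter (isClosed_le ?_ continuous_const) (isClosed_le ?_ continuous_const)
    · exact (continuous_apply x).norm
    · exact (continuous_apply x).dist (continuous_apply y)
  refine (isCompact_univ_pi fun x : EuclideanSpace ℝ (Fin d) =>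
    isCompact_closedBall (0 : ℂ) (A ⌈‖x‖⌉₊)).of_isClosed_subset hcl fun f hf x _ => ?_
  have hx : x ∈ Metric.closedBall (0 : EuclideanSpace ℝ (Fin d)) (⌈‖x‖⌉₊ : ℕ) := by
    simpa using Nat.le_ceil ‖x‖
  simpa using (hf _ x hx x hx).1

theorem equicontinuous_lipSet {d : ℕ} (A : ℕ → ℝ) :
    Equicontinuous ((↑) : lipSet (d := d) A → EuclideanSpace ℝ (Fin d) → ℂ) := by
  intro x
  obtain ⟨n, hn⟩ := exists_nat_gt ‖x‖
  have hx : Metric.closedBall (0 : EuclideanSpace ℝ (Fin d)) n ∈ nhds x :=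
    mem_of_superset (Metric.isOpen_ball.mem_nhds (by simpa using hn)) Metric.ball_subset_closedBall
  refine Metric.equicontinuousAt_of_continuity_modulus (fun y => A n * dist x y) ?_ _ ?_
  · have : Continuous fun y => A n * dist x y := by fun_prop
    simpa using this.tendsto x
  · filter_upwards [hx] with y hy f
    exact (f.2 n x (mem_of_mem_nhds hx) y hy).2

theorem isCompact_lipSet {d : ℕ} (A : ℕ → ℝ) :
    IsCompact {f : C(EuclideanSpace ℝ (Fin d), ℂ) | ⇑f ∈ lipSet A} := by
  refine ArzelaAscoli.isCompact_of_equicontinuous _ ?_ ?_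
  · convert isCompact_lipSet_pi (d := d) A using 1
    ext f
    constructor
    · rintro ⟨g, hg, rfl⟩
      exact hg
    · intro hf
      exact ⟨⟨f, (equicontinuous_lipSet A).continuous ⟨f, hf⟩⟩, hf, rfl⟩
  · exact (equicontinuous_lipSet A).comp
      (fun f : {f : C(EuclideanSpace ℝ (Fin d), ℂ) | ⇑f ∈ lipSet A} =>
        (⟨f.1, f.2⟩ : lipSet (d := d) A))

/-- Uniform local bounds on all partial derivatives yield one subsequence along which all of them
converge locally uniformly. -/
theorem exists_subseq_tendsto {d : ℕ} {φ : ℕ → EuclideanSpace ℝ (Fin d) → ℂ}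
    (hφ : ∀ j, ContDiff ℝ (⊤ : ℕ∞) (φ j)) (B : List (Fin d) → ℕ → ℝ)
    (hB : ∀ j l (n : ℕ), ∀ x ∈ Metric.closedBall (0 : EuclideanSpace ℝ (Fin d)) n,
      ‖derivAlong l (φ j) x‖ ≤ B l n) :
    ∃ σ : ℕ → ℕ, StrictMono σ ∧ ∃ G : List (Fin d) → C(EuclideanSpace ℝ (Fin d), ℂ),
      ∀ l, Tendsto (fun i => (⟨derivAlong l (φ (σ i)), (contDiff_derivAlong (hφ _) l).continuous⟩ :
        C(EuclideanSpace ℝ (Fin d), ℂ))) atTop (nhds (G l)) := by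
  let g : ℕ → List (Fin d) → C(EuclideanSpace ℝ (Fin d), ℂ) := fun j l =>
    ⟨derivAlong l (φ j), (contDiff_derivAlong (hφ j) l).continuous⟩
  let A : List (Fin d) → ℕ → ℝ := fun l n => max (B l n) (∑ m, B (m :: l) n)
  have hmem : ∀ j, g j ∈ Set.univ.pi fun l =>
      {f : C(EuclideanSpace ℝ (Fin d), ℂ) | ⇑f ∈ lipSet (A l)} := by
    intro j l _ n x hx y hy
    refine ⟨(hB j l n x hx).trans (le_max_left _ _), ?_⟩
    have := (convex_closedBall (0 : EuclideanSpace ℝ (Fin d))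
      n).norm_image_sub_le_of_norm_hasFDerivWithin_le (f := derivAlong l (φ j)) (C := A l n)
      (fun z _ => (hasFDerivAt_derivAlong (hφ j) l z).hasFDerivWithinAt)
      (fun z hz => (norm_sum_le _ _).trans ((Finset.sum_le_sum fun m _ =>
        (norm_coordForm_le m _).trans (hB j (m :: l) n z hz)).trans (le_max_right _ _))) hy hx
    rw [dist_eq_norm, dist_eq_norm]
    exact this
  obtain ⟨G, -, σ, hσ, hG⟩ :=
    (isCompact_univ_pi fun l => isCompact_lipSet (d := d) (A l)).isSeqCompact hmem
  exact ⟨σ, hσ, G, fun l => (tendsto_pi_nhds.1 hG) l⟩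

/-! ### Smoothness of the limit -/

theorem hasFDerivAt_limit {d : ℕ} {φ : ℕ → EuclideanSpace ℝ (Fin d) → ℂ}
    (hφ : ∀ j, ContDiff ℝ (⊤ : ℕ∞) (φ j)) {G : List (Fin d) → C(EuclideanSpace ℝ (Fin d), ℂ)}
    (hG : ∀ l, Tendsto (fun i => (⟨derivAlong l (φ i), (contDiff_derivAlong (hφ _) l).continuous⟩ :
        C(EuclideanSpace ℝ (Fin d), ℂ))) atTop (nhds (G l)))
    (l : List (Fin d)) (x : EuclideanSpace ℝ (Fin d)) :
    HasFDerivAt (G l) (∑ m, coordForm m (G (m :: l) x)) x := by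
  let c : Fin d → C(ℂ, EuclideanSpace ℝ (Fin d) →L[ℝ] ℂ) := fun m =>
    ⟨coordForm m, (coordForm m).continuous⟩
  have h1 : Tendsto (fun i => ∑ m, (c m).comp
      (⟨derivAlong (m :: l) (φ i), (contDiff_derivAlong (hφ _) (m :: l)).continuous⟩ :
        C(EuclideanSpace ℝ (Fin d), ℂ))) atTop (nhds (∑ m, (c m).comp (G (m :: l)))) :=
    tendsto_finsetSum _ fun m _ =>
      ((ContinuousMap.continuous_postcomp (c m)).tendsto _).comp (hG (m :: l))
  rw [ContinuousMap.tendsto_iff_tendstoLocallyUniformly] at h1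
  have h2 := hasFDerivAt_of_tendstoLocallyUniformlyOn isOpen_univ
    (tendstoLocallyUniformlyOn_univ.2 h1) (f := fun i => derivAlong l (φ i)) (g := G l)
    (fun i y _ => by
      simpa [c, ContinuousMap.sum_apply] using hasFDerivAt_derivAlong (hφ i) l y)
    (fun y _ => ((continuous_eval_const y).tendsto _).comp (hG l))
    (Set.mem_univ x)
  simpa [c, ContinuousMap.sum_apply] using h2

/-- A family closed under taking partial derivatives consists of smooth functions. -/
theorem contDiff_limit {d : ℕ} {G : List (Fin d) → EuclideanSpace ℝ (Fin d) → ℂ}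
    (hG : ∀ l x, HasFDerivAt (G l) (∑ m, coordForm m (G (m :: l) x)) x) (l : List (Fin d)) :
    ContDiff ℝ (⊤ : ℕ∞) (G l) := by
  rw [contDiff_infty]
  intro n
  induction n generalizing l with
  | zero =>
    exact contDiff_zero.2 (continuous_iff_continuousAt.2 fun x => (hG l x).continuousAt)
  | succ n ih =>
    push_cast
    refine contDiff_succ_iff_hasFDerivAt.2 ⟨_, ?_, hG l⟩
    exact ContDiff.sum fun m _ => (coordForm m).contDiff.comp (ih (m :: l))

theorem derivAlong_limit {d : ℕ} {G : List (Fin d) → EuclideanSpace ℝ (Fin d) → ℂ}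
    (hG : ∀ l x, HasFDerivAt (G l) (∑ m, coordForm m (G (m :: l) x)) x) (l : List (Fin d)) :
    derivAlong l (G []) = G l := by
  induction l with
  | nil => rfl
  | cons i l ih =>
    funext x
    simp only [derivAlong, ih]
    rw [(hG l x).fderiv]
    simp [coordForm_apply]

/-! ### The norms -/

theorem norm_derivAlong_le_of_Bnorm_le {d : ℕ} {Mp : ℕ → ℝ} (hM : ∀ p, 0 < Mp p)
    {w : EuclideanSpace ℝ (Fin d) → ℝ} (hw : ∀ x, 0 < w x) {h R : ℝ} (hh : 0 < h) (hR : 0 ≤ R)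
    {f : EuclideanSpace ℝ (Fin d) → ℂ} (hf : ContDiff ℝ (⊤ : ℕ∞) f)
    (hb : Bnorm Mp h w f ≤ ENNReal.ofReal R) (l : List (Fin d)) (x : EuclideanSpace ℝ (Fin d)) :
    ‖derivAlong l f x‖ ≤ R * Mp l.length / (h ^ l.length * w x) := by
  have h1 := (iSup_le_iff.1 ((iSup_le_iff.1 hb) fun j => l.count j)) x
  rw [ENNReal.ofReal_le_ofReal_iff hR] at h1
  have hlen : ∑ j, l.count j = l.length := by
    rw [← length_dirs, ← (perm_dirs l).length_eq]
  have hder : mderiv (fun j => l.count j) f = derivAlong l f :=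
    (derivAlong_perm hf (perm_dirs l)).symm
  rw [hlen, hder, div_le_iff₀ (hM _)] at h1
  rw [le_div_iff₀ (mul_pos (pow_pos hh _) (hw x))]
  linarith

theorem Bnorm_le_of_forall {d : ℕ} {Mp : ℕ → ℝ} {k C : ℝ} {v : EuclideanSpace ℝ (Fin d) → ℝ}
    {f : EuclideanSpace ℝ (Fin d) → ℂ}
    (hb : ∀ l x, k ^ l.length * ‖derivAlong l f x‖ * v x / Mp l.length ≤ C) :
    Bnorm Mp k v f ≤ ENNReal.ofReal C := by
  refine iSup_le fun α => iSup_le fun x => ENNReal.ofReal_le_ofReal ?_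
  have := hb (dirs α) x
  rwa [length_dirs] at this

/-- A pointwise bound in the `(h, w)` scale, read in the `(k, v)` scale, gains the factor
`(k/h)^p v/w`. -/
theorem weight_change {M h k wx vx a R : ℝ} (p : ℕ) (hM : 0 < M) (hh : 0 < h) (hk : 0 < k)
    (hw : 0 < wx) (hv : 0 < vx) (ha : a ≤ R * M / (h ^ p * wx)) :
    k ^ p * a * vx / M ≤ R * (k / h) ^ p * (vx / wx) := by
  calc k ^ p * a * vx / M ≤ k ^ p * (R * M / (h ^ p * wx)) * vx / M := by gcongr
    _ = R * (k / h) ^ p * (vx / wx) := by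
      rw [div_pow]
      field_simp

theorem exists_bound_of_tendsto_cocompact {E : Type*} [TopologicalSpace E] {r : E → ℝ}
    (hr : Continuous r) (h0 : Tendsto r (cocompact E) (nhds 0)) : ∃ C, 0 < C ∧ ∀ x, r x ≤ C := by
  obtain ⟨K, hK, hKs⟩ := mem_cocompact.1 (h0.eventually (gt_mem_nhds one_pos))
  obtain ⟨C, hC⟩ := hK.exists_bound_of_continuousOn hr.continuousOn
  refine ⟨max C 1, by positivity, fun x => ?_⟩
  by_cases hx : x ∈ K
  · exact (le_abs_self _).trans ((hC x hx).trans (le_max_left _ _))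
  · exact (le_of_lt (hKs hx)).trans (le_max_right _ _)

/-- the inclusion `B^{M_p,h}_w(ℝ^d) → B^{M_p,k}_v(ℝ^d)` is compact when
`0 < k < h` and `v/w` vanishes at infinity: every bounded sequence admits a convergent
subsequence. -/
theorem Bspace_inclusion_compact
    (d : ℕ) (Mp : ℕ → ℝ) (hMw : IsWeightSeq Mp)
    (w v : EuclideanSpace ℝ (Fin d) → ℝ)
    (hwpos : ∀ x, 0 < w x) (hvpos : ∀ x, 0 < v x)
    (hwcont : Continuous w) (hvcont : Continuous v)
    (hvw : Tendsto (fun x => v x / w x) (cocompact (EuclideanSpace ℝ (Fin d))) (nhds 0))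
    (h k : ℝ) (hk : 0 < k) (hkh : k < h)
    (φ : ℕ → EuclideanSpace ℝ (Fin d) → ℂ)
    (hφsmooth : ∀ j, ContDiff ℝ (⊤ : ℕ∞) (φ j))
    (hφbdd : ∃ R : ℝ, 0 ≤ R ∧ ∀ j, Bnorm Mp h w (φ j) ≤ ENNReal.ofReal R) :
    ∃ σ : ℕ → ℕ, StrictMono σ ∧ ∃ ψ : EuclideanSpace ℝ (Fin d) → ℂ,
      ContDiff ℝ (⊤ : ℕ∞) ψ ∧ Bnorm Mp k v ψ < ⊤ ∧
      Tendsto (fun i => Bnorm Mp k v (fun x => φ (σ i) x - ψ x)) atTop (nhds 0) := by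
  obtain ⟨R, hR, hb⟩ := hφbdd
  have hM := hMw.1
  have hh : 0 < h := hk.trans hkh
  have hbound : ∀ j l x, ‖derivAlong l (φ j) x‖ ≤ R * Mp l.length / (h ^ l.length * w x) :=
    fun j => norm_derivAlong_le_of_Bnorm_le hM hwpos hh hR (hφsmooth j) (hb j)
  have hloc : ∀ (l : List (Fin d)) (n : ℕ), ∃ B, ∀ x ∈ Metric.closedBall
      (0 : EuclideanSpace ℝ (Fin d)) n, ‖R * Mp l.length / (h ^ l.length * w x)‖ ≤ B := by
    intro l n
    refine (isCompact_closedBall _ _).exists_bound_of_continuousOn (Continuous.continuousOn ?_)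
    exact continuous_const.div (continuous_const.mul hwcont)
      fun x => (mul_pos (pow_pos hh _) (hwpos x)).ne'
  choose B hB using hloc
  obtain ⟨σ, hσ, G, hG⟩ := exists_subseq_tendsto hφsmooth B fun j l n x hx =>
    (hbound j l x).trans ((le_abs_self _).trans (hB l n x hx))
  have hfd : ∀ l x, HasFDerivAt (G l) (∑ m, coordForm m (G (m :: l) x)) x :=
    hasFDerivAt_limit (fun j => hφsmooth (σ j)) hG
  have hψ : ContDiff ℝ (⊤ : ℕ∞) (G []) := contDiff_limit (G := fun l => ⇑(G l)) hfd []
  have hder : ∀ l, derivAlong l (G []) = G l := derivAlong_limit (G := fun l => ⇑(G l)) hfd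
  have hGbound : ∀ l x, ‖G l x‖ ≤ R * Mp l.length / (h ^ l.length * w x) := fun l x =>
    le_of_tendsto (((continuous_eval_const x).tendsto _).comp (hG l)).norm
      (Eventually.of_forall fun i => hbound (σ i) l x)
  obtain ⟨C, hC0, hC⟩ := exists_bound_of_tendsto_cocompact
    (hvcont.div hwcont fun x => (hwpos x).ne') hvw
  have hq0 : 0 ≤ k / h := by positivity
  have hq1 : k / h < 1 := (div_lt_one hh).2 hkh
  refine ⟨σ, hσ, G [], hψ, ?_, ?_⟩
  · refine (Bnorm_le_of_forall (C := R * C) fun l x => ?_).trans_lt ENNReal.ofReal_lt_top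
    rw [hder]
    refine (weight_change _ (hM _) hh hk (hwpos x) (hvpos x) (hGbound l x)).trans ?_
    calc R * (k / h) ^ l.length * (v x / w x) ≤ R * 1 * C :=
          mul_le_mul (by gcongr; exact pow_le_one₀ hq0 hq1.le) (hC x)
            (div_pos (hvpos x) (hwpos x)).le (by positivity)
      _ = R * C := by ring
  · rw [ENNReal.tendsto_nhds_zero]
    intro ε hε
    obtain ⟨δ, hδ, hδε⟩ : ∃ δ : ℝ, 0 < δ ∧ ENNReal.ofReal δ ≤ ε := by
      obtain ⟨δ, hδ, hδε⟩ := ENNReal.lt_iff_exists_nnreal_btwn.1 hε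
      exact ⟨δ, by simpa using hδ, by simpa using hδε.le⟩
    -- Beyond order `N`, the geometric factor `(k/h)^N` makes the quantity small everywhere.
    obtain ⟨N, hN⟩ : ∃ N : ℕ, (2 * R) * (k / h) ^ N * C < δ := by
      have : Tendsto (fun N : ℕ => (2 * R) * (k / h) ^ N * C) atTop (nhds ((2 * R) * 0 * C)) :=
        ((tendsto_pow_atTop_nhds_zero_of_lt_one hq0 hq1).const_mul _).mul_const _
      exact (this.eventually (gt_mem_nhds (by simpa using hδ))).exists
    -- Outside `K`, the decay of `v/w` makes the quantity small for every order.
    obtain ⟨K, hK, hKs⟩ : ∃ K, IsCompact K ∧ ∀ x ∉ K, (2 * R) * (v x / w x) < δ := by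
      have h0 : Tendsto (fun x => (2 * R) * (v x / w x)) (cocompact _) (nhds 0) := by
        simpa using hvw.const_mul (2 * R)
      obtain ⟨K, hK, hKs⟩ := mem_cocompact.1 (h0.eventually (gt_mem_nhds hδ))
      exact ⟨K, hK, fun x hx => hKs hx⟩
    obtain ⟨V, hV⟩ := hK.exists_bound_of_continuousOn hvcont.continuousOn
    have hV0 : 0 < max V 1 := by positivity
    have hunif : ∀ᶠ i in atTop, ∀ l ∈ {l : List (Fin d) | l.length < N}, ∀ x ∈ K,
        dist (G l x) (derivAlong l (φ (σ i)) x) < δ * Mp l.length / (k ^ l.length * max V 1) := by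
      rw [eventually_all_finite (List.finite_length_lt (Fin d) N)]
      intro l _
      have hl := ContinuousMap.tendsto_iff_forall_isCompact_tendstoUniformlyOn.1 (hG l) K hK
      exact Metric.tendstoUniformlyOn_iff.1 hl _
        (div_pos (mul_pos hδ (hM _)) (mul_pos (pow_pos hk _) hV0))
    filter_upwards [hunif] with i hi
    refine (Bnorm_le_of_forall (C := δ) fun l x => ?_).trans hδε
    rw [derivAlong_sub (hφsmooth _) hψ, hder]
    have hdiff : ‖derivAlong l (φ (σ i)) x - G l x‖ ≤
        2 * R * Mp l.length / (h ^ l.length * w x) := by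
      refine (norm_sub_le _ _).trans ((add_le_add (hbound _ l x) (hGbound l x)).trans_eq ?_)
      ring
    have hwc := weight_change _ (hM _) hh hk (hwpos x) (hvpos x) hdiff
    have hvw0 := div_pos (hvpos x) (hwpos x)
    by_cases hx : x ∈ K
    · by_cases hl : l.length < N
      · have h1 := (hi l hl x hx).le
        rw [dist_comm, dist_eq_norm] at h1
        have h2 : v x ≤ max V 1 := (le_abs_self _).trans ((hV x hx).trans (le_max_left _ _))
        have hMl := hM l.length
        calc k ^ l.length * ‖derivAlong l (φ (σ i)) x - G l x‖ * v x / Mp l.length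
            ≤ k ^ l.length * (δ * Mp l.length / (k ^ l.length * max V 1)) * max V 1
                / Mp l.length := by
              have := (hvpos x).le
              gcongr
          _ = δ := by field_simp
      · refine hwc.trans (le_trans ?_ hN.le)
        refine mul_le_mul ?_ (hC x) hvw0.le (by positivity)
        exact mul_le_mul_of_nonneg_left
          (pow_le_pow_of_le_one hq0 hq1.le (not_lt.1 hl)) (by positivity)
    · refine hwc.trans (le_trans ?_ (hKs x hx).le)
      refine mul_le_mul_of_nonneg_right ?_ hvw0.le
      exact mul_le_of_le_one_right (by positivity) (pow_le_one₀ hq0 hq1.le)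
end

section
/- Let X and Y be completely regular Hausdorff topological spaces, let f be a nonnegative function on X × Y, let V = (v_n)_{n∈ℕ} be a decreasing weight system on X, and let U = (u_n)_{n∈ℕ} be a decreasing weight system on Y. Then sup_{(x,y)∈X×Y} f(x,y)·v_n(x)·u_n(y) < ∞ for some n ∈ ℕ if and only if sup_{(x,y)∈X×Y} f(x,y)·v(x)·u(y) < ∞ for every v in the maximal Nachbin family V̄(V) and every u in the maximal Nachbin family V̄(U). -/
/-!
If `f · (v ⊗ u)` is bounded for all `v, u` in the Nachbin families but no `f · (v_n ⊗ u_n)` is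
bounded, choose points with `f (x_n, y_n) v_n(x_n) u_n(y_n) > n`. By
`exists_inNachbin_ge_on_seq` there are `v` and `u` in the Nachbin families with
`v_n(x_n) ≤ v(x_n)` and `u_n(y_n) ≤ u(y_n)` for all `n`, so `f · (v ⊗ u)` is unbounded along
`(x_n, y_n)`. The converse is immediate, as `v ≤ C v_n` and `u ≤ D u_n`.
-/

/-- A decreasing weight system: a pointwise decreasing sequence of positive continuous
functions. -/
def DecWeightSys {X : Type*} [TopologicalSpace X] (v : ℕ → X → ℝ) : Prop :=
  (∀ n, Continuous (v n)) ∧ (∀ n x, 0 < v n x) ∧ (∀ n x, v (n + 1) x ≤ v n x)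

/-- Membership in the maximal Nachbin family associated with the decreasing weight
system `V`: nonnegative upper semicontinuous functions `v` with `sup v/v_n < ∞` for
every `n`. -/
def InNachbin {X : Type*} [TopologicalSpace X] (V : ℕ → X → ℝ) (v : X → ℝ) : Prop :=
  (∀ x, 0 ≤ v x) ∧ UpperSemicontinuous v ∧ ∀ n : ℕ, ∃ C : ℝ, ∀ x, v x / V n x ≤ C

/-- Any sequence of values `V k (x k)` is dominated by a single member of the maximal Nachbin
family, namely `⨅ n, c n * V n` with `c n ≥ 1` growing fast enough. -/
lemma exists_inNachbin_ge_on_seq {X : Type*} [TopologicalSpace X] {V : ℕ → X → ℝ}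
    (hV : DecWeightSys V) (x : ℕ → X) :
    ∃ v : X → ℝ, InNachbin V v ∧ ∀ k, V k (x k) ≤ v (x k) := by
  obtain ⟨hc, hp, hd⟩ := hV
  have hanti : ∀ z, Antitone fun n => V n z := fun z => antitone_nat_of_succ_le fun n => hd n z
  -- `c n ≥ 1` handles the indices `n ≤ k`; the sum gives `c n * V n (x k) ≥ V k (x k)` for `k < n`.
  let c : ℕ → ℝ := fun n => 1 + ∑ k ∈ Finset.range n, V k (x k) / V n (x k)
  have hterm : ∀ n k, 0 ≤ V k (x k) / V n (x k) := fun n k =>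
    (div_pos (hp _ _) (hp _ _)).le
  have hc1 : ∀ n, 1 ≤ c n := fun n =>
    le_add_of_nonneg_right (Finset.sum_nonneg fun k _ => hterm n k)
  have hnn : ∀ n z, 0 ≤ c n * V n z := fun n z =>
    mul_nonneg (zero_le_one.trans (hc1 n)) (hp n z).le
  have hbdd : ∀ z, BddBelow (Set.range fun n => c n * V n z) := fun z =>
    ⟨0, by rintro _ ⟨n, rfl⟩; exact hnn n z⟩
  refine ⟨fun z => ⨅ n, c n * V n z, ⟨fun z => le_ciInf fun n => hnn n z, ?_, fun n => ?_⟩,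
    fun k => le_ciInf fun n => ?_⟩
  · exact upperSemicontinuous_ciInf hbdd fun n =>
      (continuous_const.mul (hc n)).upperSemicontinuous
  · exact ⟨c n, fun z => (div_le_iff₀ (hp n z)).2 (ciInf_le (hbdd z) n)⟩
  · rcases le_or_gt n k with h | h
    · exact (hanti (x k) h).trans (le_mul_of_one_le_left (hp _ _).le (hc1 n))
    · rw [← div_le_iff₀ (hp n (x k))]
      have := Finset.single_le_sum (f := fun k => V k (x k) / V n (x k))
        (fun k _ => hterm n k) (Finset.mem_range.2 h)
      simp only [c]
      linarith

/-- two-variable version: `sup f·(v_n ⊗ u_n) < ∞` for some `n` iff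
`sup f·(v ⊗ u) < ∞` for all members `v, u` of the respective maximal Nachbin families. -/
theorem bounded_some_weight_iff_bounded_all_Nachbin_prod
    {X : Type*} [TopologicalSpace X] [CompletelyRegularSpace X] [T2Space X]
    {Y : Type*} [TopologicalSpace Y] [CompletelyRegularSpace Y] [T2Space Y]
    (V : ℕ → X → ℝ) (hV : DecWeightSys V)
    (U : ℕ → Y → ℝ) (hU : DecWeightSys U)
    (f : X → Y → ℝ) (hf : ∀ x y, 0 ≤ f x y) :
    (∃ n : ℕ, ∃ C : ℝ, ∀ x y, f x y * V n x * U n y ≤ C) ↔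
    (∀ v : X → ℝ, ∀ u : Y → ℝ, InNachbin V v → InNachbin U u →
      ∃ C : ℝ, ∀ x y, f x y * v x * u y ≤ C) := by
  constructor
  · rintro ⟨n, C, hC⟩ v u ⟨hv0, -, hv⟩ ⟨hu0, -, hu⟩
    obtain ⟨A, hA⟩ := hv n
    obtain ⟨B, hB⟩ := hu n
    refine ⟨|A| * |B| * |C|, fun x y => ?_⟩
    have hVp := hV.2.1 n x
    have hUp := hU.2.1 n y
    have h1 : v x ≤ |A| * V n x := (div_le_iff₀ hVp).1 ((hA x).trans (le_abs_self A))
    have h2 : u y ≤ |B| * U n y := (div_le_iff₀ hUp).1 ((hB y).trans (le_abs_self B))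
    have hf' := hf x y
    have hu0' := hu0 y
    calc f x y * v x * u y ≤ f x y * (|A| * V n x) * (|B| * U n y) := by gcongr
      _ = |A| * |B| * (f x y * V n x * U n y) := by ring
      _ ≤ |A| * |B| * |C| := by
        gcongr
        exact (hC x y).trans (le_abs_self C)
  · intro h
    by_contra! hcon
    choose x y hxy using fun n : ℕ => hcon n n
    obtain ⟨v, hv, hvx⟩ := exists_inNachbin_ge_on_seq hV x
    obtain ⟨u, hu, huy⟩ := exists_inNachbin_ge_on_seq hU y
    obtain ⟨C, hC⟩ := h v u hv hu
    obtain ⟨n, hn⟩ := exists_nat_gt C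
    have hf' := hf (x n) (y n)
    have hv0 := hv.1 (x n)
    have hU0 := (hU.2.1 n (y n)).le
    have hle : f (x n) (y n) * V n (x n) * U n (y n) ≤ f (x n) (y n) * v (x n) * u (y n) := by
      gcongr
      · exact hvx n
      · exact huy n
    linarith [hxy n, hC (x n) (y n)]
end
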